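/- Let n ≥ 1 and d : Fin n → ℕ with d j ≥ 2 for every j, and set N = (∏ j, d j) − (∑ j, (d j − 1)) − 1. Then: (a) there exists a subspace C of EuclideanSpace ℂ ((j : Fin n) → Fin (d j)) with finrank C = N whose only fully product element is 0; and (b) every subspace of EuclideanSpace ℂ ((j : Fin n) → Fin (d j)) with finrank equal to N + 1 contains a nonzero fully product vector. Hence the maximum dimension of a completely entangled subspace equals ∏ j, d j − ∑ j, (d j − 1) − 1. -/

import Mathlib

/-- A vector in the `n`-partite space `⊗_j ℂ^{d_j}` is *fully product* if it is a
simple tensor, i.e. `ψ i = ∏ j, φ j (i j)` for some local vectors `φ j`. -/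
def FullyProduct {n : ℕ} {d : Fin n → ℕ}
    (ψ : EuclideanSpace ℂ ((j : Fin n) → Fin (d j))) : Prop :=
  ∃ φ : (j : Fin n) → Fin (d j) → ℂ, ∀ i, ψ i = ∏ j, φ j (i j)

section CompletelyEntangled

open MvPolynomial

section Segre

variable (K : Type*) [Field K] {σ : Type*} [DecidableEq σ]

/-- The substitution that sets the variables in `S` to zero. -/
noncomputable def killVars (S : Finset σ) : MvPolynomial σ K →ₐ[K] MvPolynomial σ K :=
  aeval fun v => if v ∈ S then 0 else X v

lemma killVars_X (S : Finset σ) (v : σ) : killVars K S (X v) = if v ∈ S then 0 else X v := by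
  simp [killVars]

lemma killVars_comp_killVars {S T : Finset σ} (h : S ⊆ T) :
    (killVars K T).comp (killVars K S) = killVars K T := by
  ext1 v
  by_cases hS : v ∈ S
  · simp [killVars_X, hS, h hS]
  · simp [killVars_X, hS]

variable {K} in
/-- The elements of the subalgebra `A` that vanish when the variables in `S` are set to zero. -/
noncomputable def killIdeal (A : Subalgebra K (MvPolynomial σ K)) (S : Finset σ) : Ideal A :=
  RingHom.ker ((killVars K S).comp A.val)

instance (A : Subalgebra K (MvPolynomial σ K)) (S : Finset σ) : (killIdeal A S).IsPrime :=
  RingHom.ker_isPrime _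

variable {K} in
lemma mem_killIdeal {A : Subalgebra K (MvPolynomial σ K)} {S : Finset σ} {a : A} :
    a ∈ killIdeal A S ↔ killVars K S a = 0 := Iff.rfl

lemma killIdeal_mono (A : Subalgebra K (MvPolynomial σ K)) {S T : Finset σ} (h : S ⊆ T) :
    killIdeal A S ≤ killIdeal A T := by
  intro a ha
  rw [mem_killIdeal] at ha ⊢
  rw [← killVars_comp_killVars K h, AlgHom.comp_apply, ha, map_zero]

variable {ι : Type*} [Fintype ι] {κ : ι → Type*}

/-- The homomorphism of polynomial rings that is dual to the Segre map. -/
noncomputable def segreHom :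
    MvPolynomial ((j : ι) → κ j) K →ₐ[K] MvPolynomial (Σ j, κ j) K :=
  aeval fun i => ∏ j, X ⟨j, i j⟩

lemma segreHom_X (i : (j : ι) → κ j) : segreHom K (X i) = ∏ j, X ⟨j, i j⟩ := by
  simp [segreHom]

variable [DecidableEq ι] [∀ j, DecidableEq (κ j)]

lemma rangeRestrict_segreHom_X_mem_killIdeal {S : Finset (Σ j, κ j)} {i : (j : ι) → κ j} :
    (segreHom K).rangeRestrict (X i) ∈ killIdeal (segreHom K).range S ↔ ∃ j, ⟨j, i j⟩ ∈ S := by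
  rw [mem_killIdeal]
  change killVars K S (segreHom K (X i)) = 0 ↔ _
  simp [segreHom_X, killVars_X, Finset.prod_eq_zero_iff]

variable {K} in
/-- In the Segre ring, each variable away from a base point raises the height of the
corresponding vanishing ideal by one. -/
lemma card_le_height_killIdeal (c : (j : ι) → κ j) (S : Finset (Σ j, κ j))
    (hS : ∀ v ∈ S, v.2 ≠ c v.1) :
    (S.card : ℕ∞) ≤ (killIdeal (segreHom K).range S).height := by
  induction S using Finset.induction_on with
  | empty => simp
  | insert v S hv ih =>
    have hlt : killIdeal (segreHom K).range S < killIdeal (segreHom K).range (insert v S) := by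
      refine lt_of_le_not_ge (killIdeal_mono K _ (Finset.subset_insert v S)) fun h => ?_
      let i := Function.update c v.1 v.2
      have hi : ∃ j, ⟨j, i j⟩ ∈ insert v S := ⟨v.1, by simp [i]⟩
      rw [← rangeRestrict_segreHom_X_mem_killIdeal K] at hi
      obtain ⟨j, hj⟩ := (rangeRestrict_segreHom_X_mem_killIdeal K).1 (h hi)
      by_cases hjv : j = v.1
      · subst hjv
        exact hv (by simpa [i] using hj)
      · exact hS _ (Finset.mem_insert_of_mem hj) (by simp [i, hjv])
    rw [Finset.card_insert_of_notMem hv, Nat.cast_add, Nat.cast_one]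
    exact (add_le_add_left (ih fun w hw => hS w (Finset.mem_insert_of_mem hw)) 1).trans
      (Ideal.height_add_one_le_of_lt_of_isPrime hlt)

variable {K} in
lemma lt_height_killIdeal_univ [Nonempty ι] [∀ j, Fintype (κ j)] [∀ j, Nonempty (κ j)] :
    ((∑ j, (Fintype.card (κ j) - 1) : ℕ) : ℕ∞) <
      (killIdeal (segreHom K (κ := κ)).range Finset.univ).height := by
  let c : (j : ι) → κ j := fun _ => Classical.arbitrary _
  let S : Finset (Σ j, κ j) := Finset.univ.sigma fun j => Finset.univ.erase (c j)
  have hS : ∀ v ∈ S, v.2 ≠ c v.1 := by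
    intro v hv
    simpa [S] using hv
  have hcard : S.card = ∑ j, (Fintype.card (κ j) - 1) := by
    simp [S, Finset.card_sigma, Finset.card_erase_of_mem]
  have hlt : killIdeal (segreHom K).range S < killIdeal (segreHom K).range Finset.univ := by
    refine lt_of_le_not_ge (killIdeal_mono K _ (Finset.subset_univ S)) fun h => ?_
    have hc : ∃ j, (⟨j, c j⟩ : Σ j, κ j) ∈ Finset.univ := ⟨Classical.arbitrary ι, Finset.mem_univ _⟩
    rw [← rangeRestrict_segreHom_X_mem_killIdeal K] at hc
    obtain ⟨j, hj⟩ := (rangeRestrict_segreHom_X_mem_killIdeal K).1 (h hc)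
    exact hS _ hj rfl
  have := (add_le_add_left (card_le_height_killIdeal (K := K) c S hS) 1).trans
    (Ideal.height_add_one_le_of_lt_of_isPrime hlt)
  rw [hcard] at this
  exact (ENat.lt_add_one_iff (ENat.natCast_ne_top _)).2 le_rfl |>.trans_le this

omit [∀ j, DecidableEq (κ j)] in
lemma segre_relation (c i : (j : ι) → κ j) :
    segreHom K (X i * X c ^ Fintype.card ι) =
      segreHom K (X c * ∏ j, X (Function.update c j (i j))) := by
  have key (l : ι) :
      (X ⟨l, i l⟩ * X ⟨l, c l⟩ ^ Fintype.card ι : MvPolynomial (Σ j, κ j) K) =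
        X ⟨l, c l⟩ * ∏ j, X ⟨l, Function.update c j (i j) l⟩ := by
    have h : ∀ j ∈ Finset.univ.erase l,
        (X ⟨l, Function.update c j (i j) l⟩ : MvPolynomial (Σ j, κ j) K) = X ⟨l, c l⟩ := by
      intro j hj
      rw [Function.update_of_ne (Finset.ne_of_mem_erase hj).symm]
    rw [← Finset.mul_prod_erase _ _ (Finset.mem_univ l), Finset.prod_congr rfl h,
      Finset.prod_const, Finset.card_erase_of_mem (Finset.mem_univ l), Finset.card_univ,
      Function.update_self, mul_left_comm, ← pow_succ',
      Nat.sub_add_cancel (Fintype.card_pos_iff.2 ⟨l⟩)]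
  simp only [map_mul, map_pow, map_prod, segreHom_X]
  rw [Finset.prod_comm, ← Finset.prod_pow, ← Finset.prod_mul_distrib, ← Finset.prod_mul_distrib]
  exact Finset.prod_congr rfl fun l _ => key l

omit [∀ j, DecidableEq (κ j)] in
variable {K} in
/-- A point satisfying the Segre relations is a simple tensor. -/
lemma exists_eq_prod_of_segreHom [Nonempty ι] (y : ((j : ι) → κ j) → K)
    (hy : ∀ p, segreHom K p = 0 → aeval y p = 0) :
    ∃ φ : (j : ι) → κ j → K, ∀ i, y i = ∏ j, φ j (i j) := by
  by_cases h0 : y = 0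
  · exact ⟨0, fun i => by simp [h0]⟩
  obtain ⟨c, hc⟩ := Function.ne_iff.1 h0
  rw [Pi.zero_apply] at hc
  let j₀ : ι := Classical.arbitrary ι
  refine ⟨fun j k => (if j = j₀ then y c else 1) * (y (Function.update c j k) / y c), fun i => ?_⟩
  have h := hy (X i * X c ^ Fintype.card ι - X c * ∏ j, X (Function.update c j (i j)))
    (by rw [map_sub, segre_relation, sub_self])
  simp only [map_sub, map_mul, map_pow, map_prod, aeval_X, sub_eq_zero] at h
  rw [Finset.prod_mul_distrib, Finset.prod_ite_eq' Finset.univ j₀, Finset.prod_div_distrib,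
    Finset.prod_const, Finset.card_univ, if_pos (Finset.mem_univ _), ← mul_div_assoc, ← h,
    mul_div_cancel_right₀ _ (pow_ne_zero _ hc)]

variable {K} in
/-- Few linear forms on a tensor product have a common nonzero zero that is a simple tensor. -/
theorem exists_prod_of_linearForms [IsAlgClosed K] [Nonempty ι] [∀ j, Fintype (κ j)]
    [∀ j, Nonempty (κ j)] {m : ℕ} (hm : m ≤ ∑ j, (Fintype.card (κ j) - 1))
    (a : Fin m → ((j : ι) → κ j) → K) :
    ∃ φ : (j : ι) → κ j → K, (∃ i : (j : ι) → κ j, ∏ j, φ j (i j) ≠ 0) ∧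
      ∀ k, ∑ i, a k i * ∏ j, φ j (i j) = 0 := by
  let π := (segreHom K (κ := κ)).rangeRestrict
  have hπ : Function.Surjective π := (segreHom K).rangeRestrict_surjective
  have : IsNoetherianRing (segreHom K (κ := κ)).range :=
    isNoetherianRing_of_surjective _ _ π.toRingHom hπ
  let ℓ : Fin m → MvPolynomial ((j : ι) → κ j) K := fun k => ∑ i, C (a k i) * X i
  let I := Ideal.span (Set.range fun k => π (ℓ k))
  let M := killIdeal (segreHom K (κ := κ)).range Finset.univ
  have hX (i : (j : ι) → κ j) : π (X i) ∈ M :=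
    (rangeRestrict_segreHom_X_mem_killIdeal K).2 ⟨Classical.arbitrary ι, Finset.mem_univ _⟩
  have hIM : I ≤ M := by
    rw [Ideal.span_le]
    rintro _ ⟨k, rfl⟩
    simp only [ℓ, map_sum, map_mul]
    exact Ideal.sum_mem _ fun i _ => Ideal.mul_mem_left _ _ (hX i)
  obtain ⟨p, hp, hpM⟩ := Ideal.exists_minimalPrimes_le hIM
  have := hp.isPrime
  have hne : ¬ M ≤ p := by
    intro h
    have h1 := Ideal.height_le_card_of_mem_minimalPrimes_span (Set.finite_range _) hp
    have h2 : (Set.range fun k => π (ℓ k)).ncard ≤ m := by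
      rw [← Set.image_univ]
      exact (Set.ncard_image_le Set.finite_univ).trans (by simp)
    have h3 := lt_height_killIdeal_univ (K := K) (κ := κ)
    have h4 : M.height ≤ (m : ℕ∞) := (Ideal.height_mono h).trans (h1.trans (by exact_mod_cast h2))
    exact absurd (h3.trans_le h4) (not_lt.2 (by exact_mod_cast hm))
  let Q := p.comap π
  have hQ : Q.IsPrime := Ideal.comap_isPrime _ _
  have hy : ∃ y ∈ zeroLocus K Q, y ≠ 0 := by
    by_contra! hzero
    refine hne fun b hb => ?_
    obtain ⟨q, rfl⟩ := hπ b
    change q ∈ Q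
    rw [← IsPrime.vanishingIdeal_zeroLocus (K := K) Q, mem_vanishingIdeal_iff]
    intro y hy
    rw [hzero y hy]
    have hcomp : (aeval (0 : (Σ j, κ j) → K)).comp
        ((killVars K Finset.univ).comp (segreHom K (κ := κ))) = aeval (0 : ((j : ι) → κ j) → K) := by
      ext i
      simp [segreHom_X, killVars_X]
    have hb' : killVars K Finset.univ (segreHom K q) = 0 := hb
    rw [← hcomp, AlgHom.comp_apply, AlgHom.comp_apply, hb', map_zero]
  obtain ⟨y, hyQ, hy0⟩ := hy
  obtain ⟨φ, hφ⟩ := exists_eq_prod_of_segreHom y fun q hq => hyQ q <| by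
    have : π q = 0 := Subtype.ext hq
    simp [Q, this]
  refine ⟨φ, ?_, fun k => ?_⟩
  · obtain ⟨i, hi⟩ := Function.ne_iff.1 hy0
    exact ⟨i, hφ i ▸ hi⟩
  · have : ℓ k ∈ Q := hp.1.2 (Ideal.subset_span ⟨k, rfl⟩)
    simpa [ℓ, hφ] using hyQ _ this

end Segre

/-- A linear subspace of dimension at least `m` has a subspace of dimension exactly `m`. -/
lemma Submodule.exists_le_finrank_eq {K E : Type*} [DivisionRing K] [AddCommGroup E] [Module K E]
    (W : Submodule K E) {m : ℕ} (h : m ≤ Module.finrank K W) :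
    ∃ C ≤ W, Module.finrank K C = m := by
  obtain ⟨f, hf⟩ := exists_linearIndependent_of_le_finrank h
  refine ⟨Submodule.span K (Set.range fun k => (f k : E)), ?_, ?_⟩
  · rw [Submodule.span_le]
    rintro _ ⟨k, rfl⟩
    exact (f k).2
  · exact (finrank_span_eq_card (hf.map' W.subtype W.ker_subtype)).trans (Fintype.card_fin m)

variable {n : ℕ} {d : Fin n → ℕ}

/-- The linear map sending the basis vector `|i⟩` to the monomial of degree `∑ j, i j`. -/
noncomputable def toDegreePolynomial (d : Fin n → ℕ) :
    EuclideanSpace ℂ ((j : Fin n) → Fin (d j)) →ₗ[ℂ] Polynomial ℂ where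
  toFun ψ := ∑ i, Polynomial.C (ψ i) * Polynomial.X ^ (∑ j, (i j : ℕ))
  map_add' ψ χ := by simp [add_mul, Finset.sum_add_distrib]
  map_smul' c ψ := by simp [Finset.smul_sum, Polynomial.smul_eq_C_mul, mul_assoc]

lemma toDegreePolynomial_apply (ψ : EuclideanSpace ℂ ((j : Fin n) → Fin (d j))) :
    toDegreePolynomial d ψ = ∑ i, Polynomial.C (ψ i) * Polynomial.X ^ (∑ j, (i j : ℕ)) := rfl

lemma toDegreePolynomial_mem_degreeLT (ψ : EuclideanSpace ℂ ((j : Fin n) → Fin (d j))) :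
    toDegreePolynomial d ψ ∈ Polynomial.degreeLT ℂ ((∑ j, (d j - 1)) + 1) := by
  refine Submodule.sum_mem _ fun i _ => ?_
  rw [Polynomial.mem_degreeLT]
  refine (Polynomial.degree_C_mul_X_pow_le _ _).trans_lt ?_
  exact_mod_cast Nat.lt_succ_of_le (Finset.sum_le_sum fun j _ => Nat.le_sub_one_of_lt (i j).2)

lemma FullyProduct.eq_zero_of_toDegreePolynomial_eq_zero
    {ψ : EuclideanSpace ℂ ((j : Fin n) → Fin (d j))} (hψ : FullyProduct ψ)
    (h : toDegreePolynomial d ψ = 0) : ψ = 0 := by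
  obtain ⟨φ, hφ⟩ := hψ
  have hprod : ∏ j, ∑ k : Fin (d j), Polynomial.C (φ j k) * Polynomial.X ^ (k : ℕ) = 0 := by
    rw [← h, toDegreePolynomial_apply, Finset.prod_univ_sum, Fintype.piFinset_univ]
    refine Finset.sum_congr rfl fun i _ => ?_
    rw [hφ, Finset.prod_mul_distrib, Finset.prod_pow_eq_pow_sum, map_prod]
  obtain ⟨j, -, hj⟩ := Finset.prod_eq_zero_iff.1 hprod
  have hφj (k : Fin (d j)) : φ j k = 0 := by
    simpa [Polynomial.finsetSum_coeff, Polynomial.coeff_X_pow, Fin.val_inj]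
      using congrArg (Polynomial.coeff · (k : ℕ)) hj
  ext i
  rw [hφ, Finset.prod_eq_zero (Finset.mem_univ j) (hφj _)]
  rfl

lemma finrank_ker_toDegreePolynomial (d : Fin n → ℕ) :
    (∏ j, d j) - (∑ j, (d j - 1)) - 1 ≤
      Module.finrank ℂ (LinearMap.ker (toDegreePolynomial d)) := by
  let L := (toDegreePolynomial d).codRestrict _ toDegreePolynomial_mem_degreeLT
  have h1 := L.finrank_range_add_finrank_ker
  have h2 : Module.finrank ℂ (LinearMap.range L) ≤ (∑ j, (d j - 1)) + 1 := by
    have := (Polynomial.degreeLTEquiv ℂ ((∑ j, (d j - 1)) + 1)).symm.finiteDimensional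
    refine (Submodule.finrank_le _).trans_eq ?_
    rw [(Polynomial.degreeLTEquiv ℂ _).finrank_eq, Module.finrank_fin_fun]
  rw [LinearMap.ker_codRestrict, finrank_euclideanSpace, Fintype.card_pi] at h1
  simp only [Fintype.card_fin] at h1
  omega

/-- A subspace of codimension at most `∑ j, (d j - 1)` contains a nonzero fully product vector. -/
lemma exists_fullyProduct_mem (hn : 1 ≤ n) (hd : ∀ j, 1 ≤ d j)
    (V : Submodule ℂ (EuclideanSpace ℂ ((j : Fin n) → Fin (d j))))
    (hV : (∏ j, d j) ≤ Module.finrank ℂ V + ∑ j, (d j - 1)) :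
    ∃ ψ ∈ V, ψ ≠ 0 ∧ FullyProduct ψ := by
  have : Nonempty (Fin n) := ⟨⟨0, hn⟩⟩
  have (j : Fin n) : Nonempty (Fin (d j)) := ⟨⟨0, hd j⟩⟩
  let b := Module.finBasis ℂ (EuclideanSpace ℂ ((j : Fin n) → Fin (d j)) ⧸ V)
  have hm := V.finrank_quotient_add_finrank
  rw [finrank_euclideanSpace, Fintype.card_pi] at hm
  simp only [Fintype.card_fin] at hm
  obtain ⟨φ, ⟨i, hi⟩, hφ⟩ := exists_prod_of_linearForms (K := ℂ) (κ := fun j => Fin (d j))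
    (by simpa using (by omega :
      Module.finrank ℂ (EuclideanSpace ℂ ((j : Fin n) → Fin (d j)) ⧸ V) ≤ ∑ j, (d j - 1)))
    fun k i => b.coord k (V.mkQ (EuclideanSpace.single i 1))
  let ψ : EuclideanSpace ℂ ((j : Fin n) → Fin (d j)) := WithLp.toLp 2 fun i => ∏ j, φ j (i j)
  refine ⟨ψ, ?_, fun h => hi (congrArg (fun χ => χ.ofLp i) h), φ, fun i => rfl⟩
  have hψ : ψ = ∑ i, (∏ j, φ j (i j)) • EuclideanSpace.single i (1 : ℂ) := by
    ext i
    simp [ψ, Pi.single_apply]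
  rw [← Submodule.ker_mkQ V, LinearMap.mem_ker]
  refine b.ext_elem fun k => ?_
  have := hφ k
  rw [hψ]
  simpa [mul_comm] using this

end CompletelyEntangled

/-- Theorem 1: the maximum dimension of a completely entangled subspace of
`⊗_j ℂ^{d_j}` is `∏ j, d j − ∑ j, (d j − 1) − 1`. -/
theorem max_dim_CES (n : ℕ) (hn : 1 ≤ n) (d : Fin n → ℕ) (hd : ∀ j, 2 ≤ d j)
    (N : ℕ) (hN : N = (∏ j, d j) - (∑ j, (d j - 1)) - 1) :
    (∃ C : Submodule ℂ (EuclideanSpace ℂ ((j : Fin n) → Fin (d j))),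
        Module.finrank ℂ ↥C = N ∧ ∀ ψ ∈ C, FullyProduct ψ → ψ = 0) ∧
    (∀ V : Submodule ℂ (EuclideanSpace ℂ ((j : Fin n) → Fin (d j))),
        Module.finrank ℂ ↥V = N + 1 → ∃ ψ ∈ V, ψ ≠ 0 ∧ FullyProduct ψ) := by
  refine ⟨?_, fun V hV => exists_fullyProduct_mem hn (fun j => one_le_two.trans (hd j)) V ?_⟩
  · obtain ⟨C, hC, hCN⟩ := (LinearMap.ker (toDegreePolynomial d)).exists_le_finrank_eq
      (hN.trans_le (finrank_ker_toDegreePolynomial d))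
    exact ⟨C, hCN, fun ψ hψ h => h.eq_zero_of_toDegreePolynomial_eq_zero (hC hψ)⟩
  · omega
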